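/- Let λ be a real number with λ > 1, let z₀ ∈ ℂ and φ ∈ ℝ. Then the set of all w ∈ ℂ with w ≠ 0 for which there exist sequences n : ℕ → ℕ and t : ℕ → ℝ with t k → +∞ such that (λ ^ (n k))⁻¹ • (z₀ + (t k) • e^{iφ}) converges to w, is exactly the open ray {s • e^{iφ} : s ∈ ℝ, s > 0}. -/

import Mathlib

open Filter

/-!
Since `c • (z + t • u) = (c * t) • (t⁻¹ • z + u)`, a rescaled point of the line far out in the
direction `u` lies on the ray through a vector close to `u`. In a normed space "lying on the same
ray" is the closed condition `‖x‖ • y = ‖y‖ • x`, so it survives in the limit. Conversely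
`(a n)⁻¹ • (z + (a n * s) • u) = (a n)⁻¹ • z + s • u` tends to `s • u` as `a n` tends to infinity.
-/

open scoped Topology

theorem sameRay_smul_add_smul {K V : Type*} [Field K] [LinearOrder K] [IsStrictOrderedRing K]
    [AddCommMonoid V] [Module K V] {c t : K} (hc : 0 ≤ c) (ht : 0 < t) (z u : V) :
    SameRay K (c • (z + t • u)) (t⁻¹ • z + u) := by
  have hfactor : c • (z + t • u) = (c * t) • (t⁻¹ • z + u) := by
    rw [mul_smul, smul_add t, smul_inv_smul₀ ht.ne']
  rw [hfactor]
  exact SameRay.sameRay_nonneg_smul_left _ (mul_nonneg hc ht.le)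

section TopologicalModule

variable {ι V : Type*} {f : Filter ι} [AddCommMonoid V] [TopologicalSpace V] [ContinuousAdd V]
  [Module ℝ V] [ContinuousSMul ℝ V]

theorem tendsto_inv_smul_add {t : ι → ℝ} (ht : Tendsto t f atTop) (z u : V) :
    Tendsto (fun k => (t k)⁻¹ • z + u) f (𝓝 u) := by
  simpa using (ht.inv_tendsto_atTop.smul_const z).add_const u

theorem tendsto_inv_smul_add_mul_smul {a : ι → ℝ} (ha : Tendsto a f atTop) (z u : V) (s : ℝ) :
    Tendsto (fun k => (a k)⁻¹ • (z + (a k * s) • u)) f (𝓝 (s • u)) := by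
  refine (tendsto_inv_smul_add ha z (s • u)).congr' ?_
  filter_upwards [ha.eventually_ne_atTop 0] with k hk
  rw [mul_smul, smul_add, inv_smul_smul₀ hk]

end TopologicalModule

section NormedSpace

variable {ι E : Type*} {f : Filter ι} [NormedAddCommGroup E] [NormedSpace ℝ E]

theorem isClosed_setOf_sameRay : IsClosed {p : E × E | SameRay ℝ p.1 p.2} := by
  simp only [sameRay_iff_norm_smul_eq]
  exact isClosed_eq (by fun_prop) (by fun_prop)

theorem sameRay_of_tendsto [f.NeBot] {x y : ι → E} {v w : E} (hx : Tendsto x f (𝓝 v))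
    (hy : Tendsto y f (𝓝 w)) (hxy : ∀ᶠ k in f, SameRay ℝ (x k) (y k)) : SameRay ℝ v w :=
  isClosed_setOf_sameRay.mem_of_tendsto (hx.prodMk_nhds hy) hxy

theorem sameRay_of_tendsto_smul_add_smul [f.NeBot] {c t : ι → ℝ} {z u w : E}
    (hc : ∀ᶠ k in f, 0 ≤ c k) (ht : Tendsto t f atTop)
    (hw : Tendsto (fun k => c k • (z + t k • u)) f (𝓝 w)) : SameRay ℝ w u := by
  refine sameRay_of_tendsto hw (tendsto_inv_smul_add ht z u) ?_
  filter_upwards [hc, ht.eventually_gt_atTop 0] with k hck htk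
  exact sameRay_smul_add_smul hck htk z u

theorem accumulation_set_eq_ray_general {a : ℕ → ℝ} (ha_nonneg : ∀ n, 0 ≤ a n)
    (ha : Tendsto a atTop atTop) (z : E) {u : E} (hu : u ≠ 0) :
    {w : E | w ≠ 0 ∧ ∃ (n : ℕ → ℕ) (t : ℕ → ℝ), Tendsto t atTop atTop ∧
        Tendsto (fun k => (a (n k))⁻¹ • (z + t k • u)) atTop (𝓝 w)} =
      {w : E | ∃ s : ℝ, 0 < s ∧ w = s • u} := by
  ext w
  constructor
  · rintro ⟨hw, n, t, ht, hlim⟩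
    have hray : SameRay ℝ u w :=
      (sameRay_of_tendsto_smul_add_smul
        (.of_forall fun k => inv_nonneg.2 (ha_nonneg (n k))) ht hlim).symm
    obtain ⟨s, hs, rfl⟩ := hray.exists_pos_left hu hw
    exact ⟨s, hs, rfl⟩
  · rintro ⟨s, hs, rfl⟩
    exact ⟨smul_ne_zero hs.ne' hu, id, fun k => a k * s, ha.atTop_mul_const hs,
      tendsto_inv_smul_add_mul_smul ha z u s⟩

end NormedSpace

/-- The set of nonzero accumulation points of the `λ`-orbit of the line
`{z₀ + t·e^{iφ}}` as `t → +∞` is exactly the open ray `{s·e^{iφ} : s > 0}`. -/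
theorem accumulation_set_eq_ray (l : ℝ) (hl : 1 < l) (z₀ : ℂ) (φ : ℝ) :
    {w : ℂ | w ≠ 0 ∧ ∃ (n : ℕ → ℕ) (t : ℕ → ℝ), Tendsto t atTop atTop ∧
        Tendsto (fun k => (l ^ (n k))⁻¹ • (z₀ + (t k) • Complex.exp (φ * Complex.I)))
          atTop (nhds w)} =
      {w : ℂ | ∃ s : ℝ, 0 < s ∧ w = s • Complex.exp (φ * Complex.I)} :=
  accumulation_set_eq_ray_general (fun n => pow_nonneg (zero_le_one.trans hl.le) n)
    (tendsto_pow_atTop_atTop_of_one_lt hl) z₀ (Complex.exp_ne_zero _)
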